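/- Every 3-dimensional complex Poisson algebra (P, ·, {-,-}) is isomorphic to one of the following Poisson algebras, each given on a basis e₁,e₂,e₃ (all unlisted products of basis vectors are zero or determined by commutativity of · and anticommutativity of {-,-}): P₃,₁: all products zero; P₃,₂: {e₁,e₂}=e₃; P₃,₃: {e₁,e₂}=e₂, {e₁,e₃}=e₂+e₃; P₃,₄^α (α ∈ ℂ): {e₁,e₂}=e₂, {e₁,e₃}=αe₃; P₃,₅: {e₁,e₂}=e₃, {e₁,e₃}=−2e₁, {e₂,e₃}=2e₂; P₃,₆: e₁·e₁=e₂, e₁·e₂=e₃; P₃,₇: e₁·e₁=e₁, e₂·e₂=e₂, e₃·e₃=e₃; P₃,₈: e₁·e₁=e₁, e₂·e₂=e₂, e₂·e₃=e₃; P₃,₉: e₁·e₁=e₁, e₁·e₂=e₂, e₁·e₃=e₃, e₂·e₂=e₃; P₃,₁₀: e₁·e₁=e₁, e₂·e₂=e₂; P₃,₁₁: e₁·e₁=e₁, e₁·e₂=e₂; P₃,₁₂: e₁·e₁=e₁, e₂·e₂=e₃; P₃,₁₃: e₁·e₁=e₂; P₃,₁₄: e₁·e₁=e₂, {e₁,e₃}=e₃;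 P₃,₁₅: e₁·e₁=e₂, {e₁,e₃}=e₂; P₃,₁₆^α (α ∈ ℂ): e₁·e₂=e₃, {e₁,e₂}=αe₃; P₃,₁₇: e₁·e₁=e₁, e₁·e₂=e₂, e₁·e₃=e₃; P₃,₁₈: e₁·e₁=e₁, e₁·e₂=e₂, e₁·e₃=e₃, {e₂,e₃}=e₂; P₃,₁₉: e₁·e₁=e₁; P₃,₂₀: e₁·e₁=e₁, {e₂,e₃}=e₂. -/

import Mathlib

open scoped BigOperators

/-- The bilinear map on `Fin n → ℂ` determined by structure constants `c`. -/
noncomputable def sb {n : ℕ} (c : Fin n → Fin n → Fin n → ℂ) :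
    (Fin n → ℂ) →ₗ[ℂ] (Fin n → ℂ) →ₗ[ℂ] (Fin n → ℂ) :=
  LinearMap.mk₂ ℂ (fun x y k => ∑ a, ∑ b, c a b k * (x a * y b))
    (fun x x' y => by
      funext k
      simp [add_mul, mul_add, Finset.sum_add_distrib])
    (fun r x y => by
      funext k
      simp only [Pi.smul_apply, smul_eq_mul, Finset.mul_sum]
      exact Finset.sum_congr rfl fun a _ => Finset.sum_congr rfl fun b _ => by ring)
    (fun x y y' => by
      funext k
      simp [mul_add, Finset.sum_add_distrib])
    (fun r x y => by
      funext k
      simp only [Pi.smul_apply, smul_eq_mul, Finset.mul_sum]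
      exact Finset.sum_congr rfl fun a _ => Finset.sum_congr rfl fun b _ => by ring)

/-- Isomorphism of the Poisson-type double algebra `(P, m, b)` with the double
algebra on `Fin 3 → ℂ` given by `(m', b')`. -/
def IsoP (P : Type*) [AddCommGroup P] [Module ℂ P]
    (m b : P →ₗ[ℂ] P →ₗ[ℂ] P)
    (m' b' : (Fin 3 → ℂ) →ₗ[ℂ] (Fin 3 → ℂ) →ₗ[ℂ] (Fin 3 → ℂ)) : Prop :=
  ∃ φ : P ≃ₗ[ℂ] (Fin 3 → ℂ),
    (∀ x y, φ (m x y) = m' (φ x) (φ y)) ∧ (∀ x y, φ (b x y) = b' (φ x) (φ y))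

/- structure constants of the commutative associative products -/
def cm6 : Fin 3 → Fin 3 → Fin 3 → ℂ :=
  ![![![0,1,0],![0,0,1],![0,0,0]], ![![0,0,1],![0,0,0],![0,0,0]], ![![0,0,0],![0,0,0],![0,0,0]]]
def cm7 : Fin 3 → Fin 3 → Fin 3 → ℂ :=
  ![![![1,0,0],![0,0,0],![0,0,0]], ![![0,0,0],![0,1,0],![0,0,0]], ![![0,0,0],![0,0,0],![0,0,1]]]
def cm8 : Fin 3 → Fin 3 → Fin 3 → ℂ :=
  ![![![1,0,0],![0,0,0],![0,0,0]], ![![0,0,0],![0,1,0],![0,0,1]], ![![0,0,0],![0,0,1],![0,0,0]]]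
def cm9 : Fin 3 → Fin 3 → Fin 3 → ℂ :=
  ![![![1,0,0],![0,1,0],![0,0,1]], ![![0,1,0],![0,0,1],![0,0,0]], ![![0,0,1],![0,0,0],![0,0,0]]]
def cm10 : Fin 3 → Fin 3 → Fin 3 → ℂ :=
  ![![![1,0,0],![0,0,0],![0,0,0]], ![![0,0,0],![0,1,0],![0,0,0]], ![![0,0,0],![0,0,0],![0,0,0]]]
def cm11 : Fin 3 → Fin 3 → Fin 3 → ℂ :=
  ![![![1,0,0],![0,1,0],![0,0,0]], ![![0,1,0],![0,0,0],![0,0,0]], ![![0,0,0],![0,0,0],![0,0,0]]]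
def cm12 : Fin 3 → Fin 3 → Fin 3 → ℂ :=
  ![![![1,0,0],![0,0,0],![0,0,0]], ![![0,0,0],![0,0,1],![0,0,0]], ![![0,0,0],![0,0,0],![0,0,0]]]
def cm13 : Fin 3 → Fin 3 → Fin 3 → ℂ :=
  ![![![0,1,0],![0,0,0],![0,0,0]], ![![0,0,0],![0,0,0],![0,0,0]], ![![0,0,0],![0,0,0],![0,0,0]]]
def cm16 : Fin 3 → Fin 3 → Fin 3 → ℂ :=
  ![![![0,0,0],![0,0,1],![0,0,0]], ![![0,0,1],![0,0,0],![0,0,0]], ![![0,0,0],![0,0,0],![0,0,0]]]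
def cm17 : Fin 3 → Fin 3 → Fin 3 → ℂ :=
  ![![![1,0,0],![0,1,0],![0,0,1]], ![![0,1,0],![0,0,0],![0,0,0]], ![![0,0,1],![0,0,0],![0,0,0]]]
def cm19 : Fin 3 → Fin 3 → Fin 3 → ℂ :=
  ![![![1,0,0],![0,0,0],![0,0,0]], ![![0,0,0],![0,0,0],![0,0,0]], ![![0,0,0],![0,0,0],![0,0,0]]]

/- structure constants of the Lie brackets -/
def cb2 : Fin 3 → Fin 3 → Fin 3 → ℂ :=
  ![![![0,0,0],![0,0,1],![0,0,0]], ![![0,0,-1],![0,0,0],![0,0,0]], ![![0,0,0],![0,0,0],![0,0,0]]]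
def cb3 : Fin 3 → Fin 3 → Fin 3 → ℂ :=
  ![![![0,0,0],![0,1,0],![0,1,1]], ![![0,-1,0],![0,0,0],![0,0,0]], ![![0,-1,-1],![0,0,0],![0,0,0]]]
def cb4 (α : ℂ) : Fin 3 → Fin 3 → Fin 3 → ℂ :=
  ![![![0,0,0],![0,1,0],![0,0,α]], ![![0,-1,0],![0,0,0],![0,0,0]], ![![0,0,-α],![0,0,0],![0,0,0]]]
def cb5 : Fin 3 → Fin 3 → Fin 3 → ℂ :=
  ![![![0,0,0],![0,0,1],![-2,0,0]], ![![0,0,-1],![0,0,0],![0,2,0]], ![![2,0,0],![0,-2,0],![0,0,0]]]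
def cb14 : Fin 3 → Fin 3 → Fin 3 → ℂ :=
  ![![![0,0,0],![0,0,0],![0,0,1]], ![![0,0,0],![0,0,0],![0,0,0]], ![![0,0,-1],![0,0,0],![0,0,0]]]
def cb15 : Fin 3 → Fin 3 → Fin 3 → ℂ :=
  ![![![0,0,0],![0,0,0],![0,1,0]], ![![0,0,0],![0,0,0],![0,0,0]], ![![0,-1,0],![0,0,0],![0,0,0]]]
def cb16 (α : ℂ) : Fin 3 → Fin 3 → Fin 3 → ℂ :=
  ![![![0,0,0],![0,0,α],![0,0,0]], ![![0,0,-α],![0,0,0],![0,0,0]], ![![0,0,0],![0,0,0],![0,0,0]]]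
def cb18 : Fin 3 → Fin 3 → Fin 3 → ℂ :=
  ![![![0,0,0],![0,0,0],![0,0,0]], ![![0,0,0],![0,0,0],![0,1,0]], ![![0,0,0],![0,-1,0],![0,0,0]]]

section Helpers

/-- Three vectors are linearly independent (elementary form). -/
def Fr {P : Type*} [AddCommGroup P] [Module ℂ P] (e1 e2 e3 : P) : Prop :=
  ∀ a b c : ℂ, a • e1 + b • e2 + c • e3 = 0 → a = 0 ∧ b = 0 ∧ c = 0

/-- Hypotheses on a 3-dimensional Poisson algebra. -/
structure PA {P : Type*} [AddCommGroup P] [Module ℂ P] (m b : P →ₗ[ℂ] P →ₗ[ℂ] P) : Prop where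
  dim : Module.finrank ℂ P = 3
  comm : ∀ x y, m x y = m y x
  assoc : ∀ x y z, m (m x y) z = m x (m y z)
  anti : ∀ x y, b x y = - b y x
  jac : ∀ x y z, b (b x y) z + b (b y z) x + b (b z x) y = 0
  leib : ∀ x y z, b (m x y) z = m (b x z) y + m x (b y z)

/-- The conclusion of the classification. -/
def Concl {P : Type*} [AddCommGroup P] [Module ℂ P] (m b : P →ₗ[ℂ] P →ₗ[ℂ] P) : Prop :=
    IsoP P m b 0 0 ∨
    IsoP P m b 0 (sb cb2) ∨
    IsoP P m b 0 (sb cb3) ∨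
    (∃ α : ℂ, IsoP P m b 0 (sb (cb4 α))) ∨
    IsoP P m b 0 (sb cb5) ∨
    IsoP P m b (sb cm6) 0 ∨
    IsoP P m b (sb cm7) 0 ∨
    IsoP P m b (sb cm8) 0 ∨
    IsoP P m b (sb cm9) 0 ∨
    IsoP P m b (sb cm10) 0 ∨
    IsoP P m b (sb cm11) 0 ∨
    IsoP P m b (sb cm12) 0 ∨
    IsoP P m b (sb cm13) 0 ∨
    IsoP P m b (sb cm13) (sb cb14) ∨
    IsoP P m b (sb cm13) (sb cb15) ∨
    (∃ α : ℂ, IsoP P m b (sb cm16) (sb (cb16 α))) ∨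
    IsoP P m b (sb cm17) 0 ∨
    IsoP P m b (sb cm17) (sb cb18) ∨
    IsoP P m b (sb cm19) 0 ∨
    IsoP P m b (sb cm19) (sb cb18)

variable {P : Type*} [AddCommGroup P] [Module ℂ P] {m b : P →ₗ[ℂ] P →ₗ[ℂ] P}
  {e1 e2 e3 : P}

theorem Fr.li (h : Fr e1 e2 e3) : LinearIndependent ℂ ![e1, e2, e3] := by
  rw [Fintype.linearIndependent_iff]
  intro g hg
  simp only [Fin.sum_univ_three, Matrix.cons_val_zero, Matrix.cons_val_one, Matrix.cons_val] at hg
  obtain ⟨h0, h1, h2⟩ := h _ _ _ hg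
  intro i
  fin_cases i <;> assumption

theorem Fr.span (hd : Module.finrank ℂ P = 3) (h : Fr e1 e2 e3) (y : P) :
    ∃ a b c : ℂ, y = a • e1 + b • e2 + c • e3 := by
  have : FiniteDimensional ℂ P := FiniteDimensional.of_finrank_pos (by omega)
  let v := basisOfLinearIndependentOfCardEqFinrank h.li (by simp [hd])
  refine ⟨v.repr y 0, v.repr y 1, v.repr y 2, ?_⟩
  conv_lhs => rw [← v.sum_repr y]
  simp [Fin.sum_univ_three, v]

theorem Fr.inj (h : Fr e1 e2 e3) {a b c a' b' c' : ℂ}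
    (he : a • e1 + b • e2 + c • e3 = a' • e1 + b' • e2 + c' • e3) :
    a = a' ∧ b = b' ∧ c = c' := by
  obtain ⟨h0, h1, h2⟩ := h (a - a') (b - b') (c - c') (by linear_combination (norm := module) he)
  exact ⟨sub_eq_zero.1 h0, sub_eq_zero.1 h1, sub_eq_zero.1 h2⟩

theorem Fr.change (h : Fr e1 e2 e3) {f1 f2 f3 : P} (p1 p2 p3 q1 q2 q3 r1 r2 r3 : ℂ)
    (h1 : f1 = p1 • e1 + p2 • e2 + p3 • e3)
    (h2 : f2 = q1 • e1 + q2 • e2 + q3 • e3)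
    (h3 : f3 = r1 • e1 + r2 • e2 + r3 • e3)
    (hd : p1 * (q2 * r3 - q3 * r2) - p2 * (q1 * r3 - q3 * r1) + p3 * (q1 * r2 - q2 * r1) ≠ 0) :
    Fr f1 f2 f3 := by
  intro a b c hh
  obtain ⟨g1, g2, g3⟩ := h (a * p1 + b * q1 + c * r1) (a * p2 + b * q2 + c * r2)
    (a * p3 + b * q3 + c * r3) (by rw [← hh, h1, h2, h3]; module)
  refine ⟨?_, ?_, ?_⟩
  · refine (mul_eq_zero.1 (?_ : _ * a = 0)).resolve_left hd
    linear_combination (q2 * r3 - q3 * r2) * g1 + (q3 * r1 - q1 * r3) * g2 + (q1 * r2 - q2 * r1) * g3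
  · refine (mul_eq_zero.1 (?_ : _ * b = 0)).resolve_left hd
    linear_combination (r2 * p3 - r3 * p2) * g1 + (r3 * p1 - r1 * p3) * g2 + (r1 * p2 - r2 * p1) * g3
  · refine (mul_eq_zero.1 (?_ : _ * c = 0)).resolve_left hd
    linear_combination (p2 * q3 - p3 * q2) * g1 + (p3 * q1 - p1 * q3) * g2 + (p1 * q2 - p2 * q1) * g3

theorem ext2 (hd : Module.finrank ℂ P = 3) {x y : P}
    (h : ∀ a b : ℂ, a • x + b • y = 0 → a = 0 ∧ b = 0) : ∃ z, Fr x y z := by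
  have : FiniteDimensional ℂ P := FiniteDimensional.of_finrank_pos (by omega)
  have hne : Submodule.span ℂ {x, y} ≠ ⊤ := by
    intro ht
    classical
    have h1 := finrank_span_finset_le_card (R := ℂ) ({x, y} : Finset P)
    rw [Set.finrank, Finset.coe_pair, ht, finrank_top, hd] at h1
    have h2 := Finset.card_le_two (a := x) (b := y)
    omega
  obtain ⟨z, hz⟩ : ∃ z, z ∉ Submodule.span ℂ {x, y} := by
    by_contra hc
    push Not at hc
    exact hne (Submodule.eq_top_iff'.2 hc)
  refine ⟨z, fun a b c hh => ?_⟩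
  by_cases hc : c = 0
  · subst hc
    obtain ⟨h1, h2⟩ := h a b (by simpa using hh)
    exact ⟨h1, h2, rfl⟩
  · exfalso
    apply hz
    rw [Submodule.mem_span_pair]
    refine ⟨-(a / c), -(b / c), ?_⟩
    have : c • (-(a / c)) • x + c • (-(b / c)) • y = c • z := by
      have e1 : c * (-(a / c)) = -a := by field_simp
      have e2 : c * (-(b / c)) = -b := by field_simp
      rw [smul_smul, smul_smul, e1, e2]
      linear_combination (norm := module) - hh
    rw [← smul_add] at this
    exact smul_right_injective P hc this

theorem ext1 (hd : Module.finrank ℂ P = 3) {x : P} (h : x ≠ 0) : ∃ y z, Fr x y z := by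
  have : FiniteDimensional ℂ P := FiniteDimensional.of_finrank_pos (by omega)
  have : ∃ y : P, ∀ a b : ℂ, a • x + b • y = 0 → a = 0 ∧ b = 0 := by
    by_contra hc
    push Not at hc
    have : Module.finrank ℂ P ≤ 1 := by
      refine finrank_le_one x fun w => ?_
      obtain ⟨a, c, h1, h2⟩ := hc w
      have hc0 : c ≠ 0 := by
        rintro rfl
        have ha : a ≠ 0 := fun ha => h2 ha rfl
        simp only [zero_smul, add_zero, smul_eq_zero] at h1
        tauto
      refine ⟨-(a / c), smul_right_injective P hc0 ?_⟩
      have e1 : c * (-(a / c)) = -a := by field_simp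
      simp only [smul_smul, e1]
      linear_combination (norm := module) - h1
    omega
  obtain ⟨y, hy⟩ := this
  obtain ⟨z, hz⟩ := ext2 hd hy
  exact ⟨y, z, hz⟩

theorem sb_basis (c : Fin 3 → Fin 3 → Fin 3 → ℂ) (i j : Fin 3) :
    sb c (Pi.single i 1) (Pi.single j 1) = c i j := by
  funext k
  simp only [sb, LinearMap.mk₂_apply]
  rw [Finset.sum_eq_single i, Finset.sum_eq_single j] <;>
    simp +contextual [Pi.single_apply]

theorem isoOf (H : PA m b) (hF : Fr e1 e2 e3) (cm cb : Fin 3 → Fin 3 → Fin 3 → ℂ)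
    (scm : ∀ i j k, cm i j k = cm j i k) (scb : ∀ i j k, cb i j k = - cb j i k)
    (m11 : m e1 e1 = cm 0 0 0 • e1 + cm 0 0 1 • e2 + cm 0 0 2 • e3)
    (m12 : m e1 e2 = cm 0 1 0 • e1 + cm 0 1 1 • e2 + cm 0 1 2 • e3)
    (m13 : m e1 e3 = cm 0 2 0 • e1 + cm 0 2 1 • e2 + cm 0 2 2 • e3)
    (m22 : m e2 e2 = cm 1 1 0 • e1 + cm 1 1 1 • e2 + cm 1 1 2 • e3)
    (m23 : m e2 e3 = cm 1 2 0 • e1 + cm 1 2 1 • e2 + cm 1 2 2 • e3)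
    (m33 : m e3 e3 = cm 2 2 0 • e1 + cm 2 2 1 • e2 + cm 2 2 2 • e3)
    (b12 : b e1 e2 = cb 0 1 0 • e1 + cb 0 1 1 • e2 + cb 0 1 2 • e3)
    (b13 : b e1 e3 = cb 0 2 0 • e1 + cb 0 2 1 • e2 + cb 0 2 2 • e3)
    (b23 : b e2 e3 = cb 1 2 0 • e1 + cb 1 2 1 • e2 + cb 1 2 2 • e3) :
    IsoP P m b (sb cm) (sb cb) := by
  have hd := H.dim
  have : FiniteDimensional ℂ P := FiniteDimensional.of_finrank_pos (by omega)
  let v := basisOfLinearIndependentOfCardEqFinrank hF.li (by simp [hd])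
  have hv : ∀ i, v i = ![e1, e2, e3] i := by simp [v]
  have hself : ∀ x, b x x = 0 := fun x => by
    have h := H.anti x x
    have h2 : (2 : ℂ) • b x x = 0 := by linear_combination (norm := module) h
    simpa using h2
  have scb0 : ∀ i k, cb i i k = 0 := fun i k => by
    have := scb i i k
    linear_combination (1/2 : ℂ) * this
  have hφ : ∀ (f : Fin 3 → ℂ), v.equivFun (f 0 • e1 + f 1 • e2 + f 2 • e3) = f := by
    intro f
    have := v.equivFun.apply_symm_apply f
    rw [Module.Basis.equivFun_symm_apply] at this
    simpa [Fin.sum_univ_three, hv] using this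
  have hφ1 : ∀ i, v.equivFun (v i) = Pi.single i 1 := by
    intro i
    funext j
    simp [Pi.single_apply, eq_comm]
  have hm : ∀ i j, m (v i) (v j) = cm i j 0 • e1 + cm i j 1 • e2 + cm i j 2 • e3 := by
    intro i j
    rw [hv, hv]
    fin_cases i <;> fin_cases j <;> simp
    · exact m11
    · exact m12
    · exact m13
    · rw [H.comm, m12, scm 0 1, scm 0 1, scm 0 1]
    · exact m22
    · exact m23
    · rw [H.comm, m13, scm 0 2, scm 0 2, scm 0 2]
    · rw [H.comm, m23, scm 1 2, scm 1 2, scm 1 2]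
    · exact m33
  have hb : ∀ i j, b (v i) (v j) = cb i j 0 • e1 + cb i j 1 • e2 + cb i j 2 • e3 := by
    intro i j
    rw [hv, hv]
    fin_cases i <;> fin_cases j <;> simp [scb0, hself]
    · exact b12
    · exact b13
    · rw [H.anti, b12, scb 0 1, scb 0 1, scb 0 1]; module
    · exact b23
    · rw [H.anti, b13, scb 0 2, scb 0 2, scb 0 2]; module
    · rw [H.anti, b23, scb 1 2, scb 1 2, scb 1 2]; module
  refine ⟨v.equivFun, ?_, ?_⟩
  · have : m.compr₂ v.equivFun.toLinearMap
        = (sb cm).compl₁₂ v.equivFun.toLinearMap v.equivFun.toLinearMap := by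
      refine v.ext fun i => v.ext fun j => ?_
      simp only [LinearMap.compr₂_apply, LinearMap.compl₁₂_apply, LinearEquiv.coe_coe]
      rw [hφ1, hφ1, sb_basis, hm, hφ]
    intro x y
    simpa using LinearMap.congr_fun₂ this x y
  · have : b.compr₂ v.equivFun.toLinearMap
        = (sb cb).compl₁₂ v.equivFun.toLinearMap v.equivFun.toLinearMap := by
      refine v.ext fun i => v.ext fun j => ?_
      simp only [LinearMap.compr₂_apply, LinearMap.compl₁₂_apply, LinearEquiv.coe_coe]
      rw [hφ1, hφ1, sb_basis, hb, hφ]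
    intro x y
    simpa using LinearMap.congr_fun₂ this x y

theorem sb_zero' : sb (fun _ _ _ : Fin 3 => (0 : ℂ)) = 0 := by
  refine LinearMap.ext fun x => LinearMap.ext fun y => ?_
  funext k
  simp [sb]

theorem isoOf0 (H : PA m b) (hF : Fr e1 e2 e3) (cm : Fin 3 → Fin 3 → Fin 3 → ℂ)
    (scm : ∀ i j k, cm i j k = cm j i k)
    (m11 : m e1 e1 = cm 0 0 0 • e1 + cm 0 0 1 • e2 + cm 0 0 2 • e3)
    (m12 : m e1 e2 = cm 0 1 0 • e1 + cm 0 1 1 • e2 + cm 0 1 2 • e3)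
    (m13 : m e1 e3 = cm 0 2 0 • e1 + cm 0 2 1 • e2 + cm 0 2 2 • e3)
    (m22 : m e2 e2 = cm 1 1 0 • e1 + cm 1 1 1 • e2 + cm 1 1 2 • e3)
    (m23 : m e2 e3 = cm 1 2 0 • e1 + cm 1 2 1 • e2 + cm 1 2 2 • e3)
    (m33 : m e3 e3 = cm 2 2 0 • e1 + cm 2 2 1 • e2 + cm 2 2 2 • e3)
    (b12 : b e1 e2 = 0) (b13 : b e1 e3 = 0) (b23 : b e2 e3 = 0) :
    IsoP P m b (sb cm) 0 := by
  rw [← sb_zero']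
  apply isoOf H hF cm _ scm (by simp) m11 m12 m13 m22 m23 m33 <;> simpa

theorem iso0Of (H : PA m b) (h0 : m = 0) (hF : Fr e1 e2 e3) (cb : Fin 3 → Fin 3 → Fin 3 → ℂ)
    (scb : ∀ i j k, cb i j k = - cb j i k)
    (b12 : b e1 e2 = cb 0 1 0 • e1 + cb 0 1 1 • e2 + cb 0 1 2 • e3)
    (b13 : b e1 e3 = cb 0 2 0 • e1 + cb 0 2 1 • e2 + cb 0 2 2 • e3)
    (b23 : b e2 e3 = cb 1 2 0 • e1 + cb 1 2 1 • e2 + cb 1 2 2 • e3) :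
    IsoP P m b 0 (sb cb) := by
  rw [← sb_zero']
  apply isoOf H hF _ cb (by simp) scb _ _ _ _ _ _ b12 b13 b23 <;> simp [h0]

/-- A linear endomorphism of a 3-dimensional space has a nonzero eigenvalue or has cube zero. -/
theorem eig_or_nil (hd : Module.finrank ℂ P = 3) (f : P →ₗ[ℂ] P) :
    (∃ (μ : ℂ) (v : P), μ ≠ 0 ∧ v ≠ 0 ∧ f v = μ • v) ∨ ∀ x, f (f (f x)) = 0 := by
  have : FiniteDimensional ℂ P := FiniteDimensional.of_finrank_pos (by omega)
  by_cases h : ∃ (μ : ℂ) (v : P), μ ≠ 0 ∧ v ≠ 0 ∧ f v = μ • v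
  · exact Or.inl h
  right
  have hroots : ∀ μ ∈ f.charpoly.roots, μ = 0 := by
    intro μ hμ
    by_contra hne
    have h1 := Polynomial.isRoot_of_mem_roots hμ
    have h2 := (Module.End.hasEigenvalue_iff_isRoot_charpoly f μ).2 h1
    obtain ⟨v, hv⟩ := h2.exists_hasEigenvector
    exact h ⟨μ, v, hne, hv.2, hv.apply_eq_smul⟩
  have hs : f.charpoly.Splits := IsAlgClosed.splits _
  have hcard : f.charpoly.roots.card = 3 := by
    rw [← hs.natDegree_eq_card_roots, LinearMap.charpoly_natDegree, hd]
  have hrep : f.charpoly.roots = Multiset.replicate 3 0 := Multiset.eq_replicate.2 ⟨hcard, hroots⟩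
  have hX : f.charpoly = Polynomial.X ^ 3 := by
    have := hs.eq_prod_roots_of_monic f.charpoly_monic
    rw [this, hrep]
    simp
    ring
  have hc := f.aeval_self_charpoly
  rw [hX] at hc
  simp only [map_pow, Polynomial.aeval_X] at hc
  intro x
  have := LinearMap.congr_fun hc x
  simpa [pow_succ] using this

theorem nil3 (hd : Module.finrank ℂ P = 3) (f : P →ₗ[ℂ] P) (n : ℕ) (hn : f ^ n = 0) (x : P) :
    f (f (f x)) = 0 := by
  rcases eig_or_nil hd f with ⟨μ, v, hμ, hv, hf⟩ | h
  · exfalso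
    have : ∀ k : ℕ, (f ^ k) v = μ ^ k • v := by
      intro k
      induction k with
      | zero => simp
      | succ k ih => rw [pow_succ, Module.End.mul_apply, hf, map_smul, ih, smul_smul, pow_succ']
    have h := this n
    rw [hn] at h
    simp only [LinearMap.zero_apply] at h
    have := smul_eq_zero.1 h.symm
    rcases this with h | h
    · exact pow_ne_zero n hμ h
    · exact hv h
  · exact h x

theorem PA.self (H : PA m b) (x : P) : b x x = 0 := by
  have h := H.anti x x
  have h2 : (2 : ℂ) • b x x = 0 := by linear_combination (norm := module) h
  simpa using h2

/-- Fitting dichotomy. -/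
theorem idem_or_nil (H : PA m b) (x : P) :
    (∃ w, m (m x w) (m x w) = m x w ∧ m x w ≠ 0) ∨ ∀ y, m x (m x (m x y)) = 0 := by
  have hd := H.dim
  have : FiniteDimensional ℂ P := FiniteDimensional.of_finrank_pos (by omega)
  obtain ⟨n, hn⟩ := Filter.eventually_atTop.1 (LinearMap.eventually_iInf_range_pow_eq (m x))
  have h1 : (m x ^ n).range = (m x ^ (2 * n + 2)).range := by
    rw [← hn n le_rfl, ← hn (2 * n + 2) (by omega)]
  obtain ⟨z, hz⟩ : (m x ^ n) x ∈ (m x ^ (2 * n + 2)).range := h1 ▸ ⟨x, rfl⟩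
  have key : ∀ k : ℕ, ∀ y, m ((m x ^ k) x) y = (m x ^ (k + 1)) y := by
    intro k
    induction k with
    | zero => intro y; simp
    | succ k ih =>
      intro y
      rw [pow_succ', Module.End.mul_apply, H.assoc, ih, pow_succ' _ (k + 1), Module.End.mul_apply]
  set a := (m x ^ n) x with ha
  have haz : m a (m a z) = a := by
    rw [key, key, ← Module.End.mul_apply, ← pow_add, ← hz]
    congr 2
    ring
  have hxw : m a z = m x ((m x ^ n) z) := by
    rw [key, pow_succ', Module.End.mul_apply]
  by_cases h0 : m a z = 0
  · right
    have : a = 0 := by rw [← haz, h0, map_zero]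
    refine nil3 hd (m x) (n + 1) ?_
    ext y
    rw [← key, ← ha, this]
    simp
  · left
    refine ⟨(m x ^ n) z, ?_, ?_⟩
    · rw [← hxw]
      have : m (m a z) (m a z) = m (m a (m a z)) z := by
        rw [H.assoc a (m a z) z, H.assoc a z, H.comm z (m a z)]
      rw [this, haz]
    · rwa [← hxw]

theorem scm6 (i j k : Fin 3) : cm6 i j k = cm6 j i k := by
  fin_cases i <;> fin_cases j <;> rfl

theorem scm7 (i j k : Fin 3) : cm7 i j k = cm7 j i k := by
  fin_cases i <;> fin_cases j <;> rfl

theorem scm8 (i j k : Fin 3) : cm8 i j k = cm8 j i k := by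
  fin_cases i <;> fin_cases j <;> rfl

theorem scm9 (i j k : Fin 3) : cm9 i j k = cm9 j i k := by
  fin_cases i <;> fin_cases j <;> rfl

theorem scm10 (i j k : Fin 3) : cm10 i j k = cm10 j i k := by
  fin_cases i <;> fin_cases j <;> rfl

theorem scm11 (i j k : Fin 3) : cm11 i j k = cm11 j i k := by
  fin_cases i <;> fin_cases j <;> rfl

theorem scm12 (i j k : Fin 3) : cm12 i j k = cm12 j i k := by
  fin_cases i <;> fin_cases j <;> rfl

theorem scm13 (i j k : Fin 3) : cm13 i j k = cm13 j i k := by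
  fin_cases i <;> fin_cases j <;> rfl

theorem scm16 (i j k : Fin 3) : cm16 i j k = cm16 j i k := by
  fin_cases i <;> fin_cases j <;> rfl

theorem scm17 (i j k : Fin 3) : cm17 i j k = cm17 j i k := by
  fin_cases i <;> fin_cases j <;> rfl

theorem scm19 (i j k : Fin 3) : cm19 i j k = cm19 j i k := by
  fin_cases i <;> fin_cases j <;> rfl

theorem scb2 (i j k : Fin 3) : cb2 i j k = - cb2 j i k := by
  fin_cases i <;> fin_cases j <;> fin_cases k <;> simp [cb2]

theorem scb3 (i j k : Fin 3) : cb3 i j k = - cb3 j i k := by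
  fin_cases i <;> fin_cases j <;> fin_cases k <;> simp [cb3]

theorem scb4 (α : ℂ) (i j k : Fin 3) : cb4 α i j k = - cb4 α j i k := by
  fin_cases i <;> fin_cases j <;> fin_cases k <;> simp [cb4]

theorem scb5 (i j k : Fin 3) : cb5 i j k = - cb5 j i k := by
  fin_cases i <;> fin_cases j <;> fin_cases k <;> simp [cb5]

theorem scb14 (i j k : Fin 3) : cb14 i j k = - cb14 j i k := by
  fin_cases i <;> fin_cases j <;> fin_cases k <;> simp [cb14]

theorem scb15 (i j k : Fin 3) : cb15 i j k = - cb15 j i k := by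
  fin_cases i <;> fin_cases j <;> fin_cases k <;> simp [cb15]

theorem scb16 (α : ℂ) (i j k : Fin 3) : cb16 α i j k = - cb16 α j i k := by
  fin_cases i <;> fin_cases j <;> fin_cases k <;> simp [cb16]

theorem scb18 (i j k : Fin 3) : cb18 i j k = - cb18 j i k := by
  fin_cases i <;> fin_cases j <;> fin_cases k <;> simp [cb18]

theorem mk1 (H : PA m b) (h0 : m = 0) (hF : Fr e1 e2 e3)
    (b12 : b e1 e2 = 0)
    (b13 : b e1 e3 = 0)
    (b23 : b e2 e3 = 0) : Concl m b := by
  have h : IsoP P m b 0 0 := by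
    rw [← sb_zero']
    apply isoOf H hF _ _ (by simp) (by simp) <;> simp [h0, *]
  simp only [Concl, h, true_or, or_true]

theorem mk2 (H : PA m b) (h0 : m = 0) (hF : Fr e1 e2 e3)
    (b12 : b e1 e2 = e3)
    (b13 : b e1 e3 = 0)
    (b23 : b e2 e3 = 0) : Concl m b := by
  have h : IsoP P m b 0 (sb cb2) := by
    apply iso0Of H h0 hF _ scb2 <;> simp [cb2, *]
  simp only [Concl, h, true_or, or_true]

theorem mk3 (H : PA m b) (h0 : m = 0) (hF : Fr e1 e2 e3)
    (b12 : b e1 e2 = e2)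
    (b13 : b e1 e3 = e2 + e3)
    (b23 : b e2 e3 = 0) : Concl m b := by
  have h : IsoP P m b 0 (sb cb3) := by
    apply iso0Of H h0 hF _ scb3 <;> simp [cb3, *]
  simp only [Concl, h, true_or, or_true]

theorem mk4 (α : ℂ) (H : PA m b) (h0 : m = 0) (hF : Fr e1 e2 e3)
    (b12 : b e1 e2 = e2)
    (b13 : b e1 e3 = α • e3)
    (b23 : b e2 e3 = 0) : Concl m b := by
  have h : IsoP P m b 0 (sb (cb4 α)) := by
    apply iso0Of H h0 hF _ (scb4 α) <;> simp [cb4, *]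
  have h' : ∃ α : ℂ, IsoP P m b 0 (sb (cb4 α)) := ⟨α, h⟩
  simp only [Concl, h', true_or, or_true]

theorem mk5 (H : PA m b) (h0 : m = 0) (hF : Fr e1 e2 e3)
    (b12 : b e1 e2 = e3)
    (b13 : b e1 e3 = (-2 : ℂ) • e1)
    (b23 : b e2 e3 = (2 : ℂ) • e2) : Concl m b := by
  have h : IsoP P m b 0 (sb cb5) := by
    apply iso0Of H h0 hF _ scb5 <;> simp [cb5, *]
  simp only [Concl, h, true_or, or_true]

theorem mk6 (H : PA m b) (hF : Fr e1 e2 e3)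
    (m11 : m e1 e1 = e2)
    (m12 : m e1 e2 = e3)
    (m13 : m e1 e3 = 0)
    (m22 : m e2 e2 = 0)
    (m23 : m e2 e3 = 0)
    (m33 : m e3 e3 = 0)
    (b12 : b e1 e2 = 0)
    (b13 : b e1 e3 = 0)
    (b23 : b e2 e3 = 0) : Concl m b := by
  have h : IsoP P m b (sb cm6) 0 := by
    apply isoOf0 H hF _ scm6 <;> simp [cm6, *]
  simp only [Concl, h, true_or, or_true]

theorem mk7 (H : PA m b) (hF : Fr e1 e2 e3)
    (m11 : m e1 e1 = e1)
    (m12 : m e1 e2 = 0)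
    (m13 : m e1 e3 = 0)
    (m22 : m e2 e2 = e2)
    (m23 : m e2 e3 = 0)
    (m33 : m e3 e3 = e3)
    (b12 : b e1 e2 = 0)
    (b13 : b e1 e3 = 0)
    (b23 : b e2 e3 = 0) : Concl m b := by
  have h : IsoP P m b (sb cm7) 0 := by
    apply isoOf0 H hF _ scm7 <;> simp [cm7, *]
  simp only [Concl, h, true_or, or_true]

theorem mk8 (H : PA m b) (hF : Fr e1 e2 e3)
    (m11 : m e1 e1 = e1)
    (m12 : m e1 e2 = 0)
    (m13 : m e1 e3 = 0)
    (m22 : m e2 e2 = e2)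
    (m23 : m e2 e3 = e3)
    (m33 : m e3 e3 = 0)
    (b12 : b e1 e2 = 0)
    (b13 : b e1 e3 = 0)
    (b23 : b e2 e3 = 0) : Concl m b := by
  have h : IsoP P m b (sb cm8) 0 := by
    apply isoOf0 H hF _ scm8 <;> simp [cm8, *]
  simp only [Concl, h, true_or, or_true]

theorem mk9 (H : PA m b) (hF : Fr e1 e2 e3)
    (m11 : m e1 e1 = e1)
    (m12 : m e1 e2 = e2)
    (m13 : m e1 e3 = e3)
    (m22 : m e2 e2 = e3)
    (m23 : m e2 e3 = 0)
    (m33 : m e3 e3 = 0)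
    (b12 : b e1 e2 = 0)
    (b13 : b e1 e3 = 0)
    (b23 : b e2 e3 = 0) : Concl m b := by
  have h : IsoP P m b (sb cm9) 0 := by
    apply isoOf0 H hF _ scm9 <;> simp [cm9, *]
  simp only [Concl, h, true_or, or_true]

theorem mk10 (H : PA m b) (hF : Fr e1 e2 e3)
    (m11 : m e1 e1 = e1)
    (m12 : m e1 e2 = 0)
    (m13 : m e1 e3 = 0)
    (m22 : m e2 e2 = e2)
    (m23 : m e2 e3 = 0)
    (m33 : m e3 e3 = 0)
    (b12 : b e1 e2 = 0)
    (b13 : b e1 e3 = 0)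
    (b23 : b e2 e3 = 0) : Concl m b := by
  have h : IsoP P m b (sb cm10) 0 := by
    apply isoOf0 H hF _ scm10 <;> simp [cm10, *]
  simp only [Concl, h, true_or, or_true]

theorem mk11 (H : PA m b) (hF : Fr e1 e2 e3)
    (m11 : m e1 e1 = e1)
    (m12 : m e1 e2 = e2)
    (m13 : m e1 e3 = 0)
    (m22 : m e2 e2 = 0)
    (m23 : m e2 e3 = 0)
    (m33 : m e3 e3 = 0)
    (b12 : b e1 e2 = 0)
    (b13 : b e1 e3 = 0)
    (b23 : b e2 e3 = 0) : Concl m b := by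
  have h : IsoP P m b (sb cm11) 0 := by
    apply isoOf0 H hF _ scm11 <;> simp [cm11, *]
  simp only [Concl, h, true_or, or_true]

theorem mk12 (H : PA m b) (hF : Fr e1 e2 e3)
    (m11 : m e1 e1 = e1)
    (m12 : m e1 e2 = 0)
    (m13 : m e1 e3 = 0)
    (m22 : m e2 e2 = e3)
    (m23 : m e2 e3 = 0)
    (m33 : m e3 e3 = 0)
    (b12 : b e1 e2 = 0)
    (b13 : b e1 e3 = 0)
    (b23 : b e2 e3 = 0) : Concl m b := by
  have h : IsoP P m b (sb cm12) 0 := by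
    apply isoOf0 H hF _ scm12 <;> simp [cm12, *]
  simp only [Concl, h, true_or, or_true]

theorem mk13 (H : PA m b) (hF : Fr e1 e2 e3)
    (m11 : m e1 e1 = e2)
    (m12 : m e1 e2 = 0)
    (m13 : m e1 e3 = 0)
    (m22 : m e2 e2 = 0)
    (m23 : m e2 e3 = 0)
    (m33 : m e3 e3 = 0)
    (b12 : b e1 e2 = 0)
    (b13 : b e1 e3 = 0)
    (b23 : b e2 e3 = 0) : Concl m b := by
  have h : IsoP P m b (sb cm13) 0 := by
    apply isoOf0 H hF _ scm13 <;> simp [cm13, *]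
  simp only [Concl, h, true_or, or_true]

theorem mk14 (H : PA m b) (hF : Fr e1 e2 e3)
    (m11 : m e1 e1 = e2)
    (m12 : m e1 e2 = 0)
    (m13 : m e1 e3 = 0)
    (m22 : m e2 e2 = 0)
    (m23 : m e2 e3 = 0)
    (m33 : m e3 e3 = 0)
    (b12 : b e1 e2 = 0)
    (b13 : b e1 e3 = e3)
    (b23 : b e2 e3 = 0) : Concl m b := by
  have h : IsoP P m b (sb cm13) (sb cb14) := by
    apply isoOf H hF _ _ scm13 scb14 <;> simp [cm13, cb14, *]
  simp only [Concl, h, true_or, or_true]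

theorem mk15 (H : PA m b) (hF : Fr e1 e2 e3)
    (m11 : m e1 e1 = e2)
    (m12 : m e1 e2 = 0)
    (m13 : m e1 e3 = 0)
    (m22 : m e2 e2 = 0)
    (m23 : m e2 e3 = 0)
    (m33 : m e3 e3 = 0)
    (b12 : b e1 e2 = 0)
    (b13 : b e1 e3 = e2)
    (b23 : b e2 e3 = 0) : Concl m b := by
  have h : IsoP P m b (sb cm13) (sb cb15) := by
    apply isoOf H hF _ _ scm13 scb15 <;> simp [cm13, cb15, *]
  simp only [Concl, h, true_or, or_true]

theorem mk16 (α : ℂ) (H : PA m b) (hF : Fr e1 e2 e3)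
    (m11 : m e1 e1 = 0)
    (m12 : m e1 e2 = e3)
    (m13 : m e1 e3 = 0)
    (m22 : m e2 e2 = 0)
    (m23 : m e2 e3 = 0)
    (m33 : m e3 e3 = 0)
    (b12 : b e1 e2 = α • e3)
    (b13 : b e1 e3 = 0)
    (b23 : b e2 e3 = 0) : Concl m b := by
  have h : IsoP P m b (sb cm16) (sb (cb16 α)) := by
    apply isoOf H hF _ _ scm16 (scb16 α) <;> simp [cm16, cb16, *]
  have h' : ∃ α : ℂ, IsoP P m b (sb cm16) (sb (cb16 α)) := ⟨α, h⟩
  simp only [Concl, h', true_or, or_true]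

theorem mk17 (H : PA m b) (hF : Fr e1 e2 e3)
    (m11 : m e1 e1 = e1)
    (m12 : m e1 e2 = e2)
    (m13 : m e1 e3 = e3)
    (m22 : m e2 e2 = 0)
    (m23 : m e2 e3 = 0)
    (m33 : m e3 e3 = 0)
    (b12 : b e1 e2 = 0)
    (b13 : b e1 e3 = 0)
    (b23 : b e2 e3 = 0) : Concl m b := by
  have h : IsoP P m b (sb cm17) 0 := by
    apply isoOf0 H hF _ scm17 <;> simp [cm17, *]
  simp only [Concl, h, true_or, or_true]

theorem mk18 (H : PA m b) (hF : Fr e1 e2 e3)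
    (m11 : m e1 e1 = e1)
    (m12 : m e1 e2 = e2)
    (m13 : m e1 e3 = e3)
    (m22 : m e2 e2 = 0)
    (m23 : m e2 e3 = 0)
    (m33 : m e3 e3 = 0)
    (b12 : b e1 e2 = 0)
    (b13 : b e1 e3 = 0)
    (b23 : b e2 e3 = e2) : Concl m b := by
  have h : IsoP P m b (sb cm17) (sb cb18) := by
    apply isoOf H hF _ _ scm17 scb18 <;> simp [cm17, cb18, *]
  simp only [Concl, h, true_or, or_true]

theorem mk19 (H : PA m b) (hF : Fr e1 e2 e3)
    (m11 : m e1 e1 = e1)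
    (m12 : m e1 e2 = 0)
    (m13 : m e1 e3 = 0)
    (m22 : m e2 e2 = 0)
    (m23 : m e2 e3 = 0)
    (m33 : m e3 e3 = 0)
    (b12 : b e1 e2 = 0)
    (b13 : b e1 e3 = 0)
    (b23 : b e2 e3 = 0) : Concl m b := by
  have h : IsoP P m b (sb cm19) 0 := by
    apply isoOf0 H hF _ scm19 <;> simp [cm19, *]
  simp only [Concl, h, true_or, or_true]

theorem mk20 (H : PA m b) (hF : Fr e1 e2 e3)
    (m11 : m e1 e1 = e1)
    (m12 : m e1 e2 = 0)
    (m13 : m e1 e3 = 0)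
    (m22 : m e2 e2 = 0)
    (m23 : m e2 e3 = 0)
    (m33 : m e3 e3 = 0)
    (b12 : b e1 e2 = 0)
    (b13 : b e1 e3 = 0)
    (b23 : b e2 e3 = e2) : Concl m b := by
  have h : IsoP P m b (sb cm19) (sb cb18) := by
    apply isoOf H hF _ _ scm19 scb18 <;> simp [cm19, cb18, *]
  simp only [Concl, h, true_or, or_true]


theorem PA.jac' (H : PA m b) (x y z : P) : b x (b y z) = b (b x y) z + b y (b x z) := by
  have h := H.jac x y z
  have h1 := H.anti (b y z) x
  have h2 := H.anti (b z x) y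
  have h3 : b y (b z x) = - b y (b x z) := by rw [H.anti z x, map_neg]
  rw [h1, h2, h3] at h
  linear_combination (norm := module) -h

theorem lieA (H : PA m b) (h0 : m = 0) {x y z : P} (hF : Fr x y z) (hy : b x y = y) (p : ℂ)
    (hz : b x z = p • x) : Concl m b := by
  obtain ⟨α, β, γ, hw⟩ := hF.span H.dim (b y z)
  have J := H.jac' x y z
  rw [hy, hz, hw] at J
  simp only [map_add, map_smul, H.self, hy, hz, H.anti y x] at J
  obtain ⟨j1, j2, j3⟩ := hF.inj (a := γ * p) (b := β) (c := 0) (a' := α) (b' := β - p) (c' := γ)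
    (by linear_combination (norm := module) J)
  have hγ : γ = 0 := j3.symm
  have hp : p = 0 := by linear_combination j2
  have hα : α = 0 := by rw [← j1, hp, mul_zero]
  subst hγ hp hα
  refine mk4 0 H h0 (e1 := x) (e2 := y) (e3 := z + β • x)
    (hF.change 1 0 0 0 1 0 β 0 1 (by module) (by module) (by module) (by norm_num)) hy ?_ ?_
  · simp [hz, H.self]
  · rw [map_add, map_smul, hw, H.anti y x, hy]; module

theorem lieB (H : PA m b) (h0 : m = 0) {x y z : P} (hF : Fr x y z) (hy : b x y = y) (μ : ℂ)
    (hμ : μ ≠ 0) (hz : b x z = μ • z) : Concl m b := by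
  obtain ⟨α, β, γ, hw⟩ := hF.span H.dim (b y z)
  have J := H.jac' x y z
  rw [hy, hz, map_smul, hw] at J
  simp only [map_add, map_smul, H.self, hy, hz] at J
  obtain ⟨j1, j2, j3⟩ := hF.inj (a := 0) (b := β) (c := γ * μ) (a' := (1 + μ) * α)
    (b' := (1 + μ) * β) (c' := (1 + μ) * γ)
    (by linear_combination (norm := module) J)
  have hγ : γ = 0 := by linear_combination -j3
  have hβ : β = 0 := by
    have : μ * β = 0 := by linear_combination -j2
    exact (mul_eq_zero.1 this).resolve_left hμ
  subst hγ hβ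
  by_cases hα : α = 0
  · subst hα
    exact mk4 μ H h0 hF hy hz (by rw [hw]; module)
  · have hm : μ = -1 := by
      have := (mul_eq_zero.1 j1.symm).resolve_right hα
      linear_combination this
    subst hm
    refine mk5 H h0 (e1 := y) (e2 := (2 / α) • z) (e3 := (2 : ℂ) • x)
      (hF.change 0 1 0 0 0 (2 / α) 2 0 0 (by module) (by module) (by module) ?_) ?_ ?_ ?_
    · simp [hα]
    · rw [map_smul, hw]
      simp only [zero_smul, add_zero, smul_smul]
      congr 1
      field_simp
    · rw [map_smul, H.anti y x, hy]; module
    · simp only [map_smul, LinearMap.smul_apply, H.anti z x, hz]; module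

theorem lieC (H : PA m b) (h0 : m = 0) {x y z : P} (hF : Fr x y z) (hy : b x y = y) (q : ℂ)
    (hz : b x z = q • y + z) : Concl m b := by
  obtain ⟨α, β, γ, hw⟩ := hF.span H.dim (b y z)
  have J := H.jac' x y z
  rw [hy, hz, map_add, map_smul, H.self, hw] at J
  simp only [map_add, map_smul, H.self, hy, hz] at J
  obtain ⟨j1, j2, j3⟩ := hF.inj (a := 0) (b := β + γ * q) (c := γ) (a' := 2 * α)
    (b' := 2 * β) (c' := 2 * γ)
    (by linear_combination (norm := module) J)
  have hγ : γ = 0 := by linear_combination -j3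
  have hα : α = 0 := by linear_combination - (1/2) * j1
  subst hγ hα
  have hβ : β = 0 := by linear_combination -j2
  subst hβ
  have hw0 : b y z = 0 := by rw [hw]; module
  by_cases hq : q = 0
  · subst hq
    exact mk4 1 H h0 hF hy (by rw [hz]; module) hw0
  · refine mk3 H h0 (e1 := x) (e2 := q • y) (e3 := z)
      (hF.change 1 0 0 0 q 0 0 0 1 (by module) (by module) (by module) (by simpa)) ?_ hz ?_
    · rw [map_smul, hy]
    · rw [map_smul, LinearMap.smul_apply, hw0, smul_zero]

theorem lieEig (H : PA m b) (h0 : m = 0) {x y : P} (hy0 : y ≠ 0) (hy : b x y = y) :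
    Concl m b := by
  have hx0 : x ≠ 0 := by
    rintro rfl
    apply hy0
    rw [← hy]; simp
  obtain ⟨z, hF⟩ := ext2 H.dim (x := x) (y := y) (by
    intro a c h
    have h1 := congrArg (b x) h
    simp only [map_add, map_smul, H.self, hy, smul_zero, zero_add, map_zero] at h1
    have hc : c = 0 := (smul_eq_zero.1 h1).resolve_right hy0
    subst hc
    refine ⟨(smul_eq_zero.1 (?_ : a • x = 0)).resolve_right hx0, rfl⟩
    simpa using h)
  obtain ⟨p, q, μ, hz⟩ := hF.span H.dim (b x z)
  by_cases h1 : μ = 0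
  · subst h1
    refine lieA H h0 (x := x) (y := y) (z := z + (-q) • y)
      (hF.change 1 0 0 0 1 0 0 (-q) 1 (by module) (by module) (by module) (by norm_num)) hy p ?_
    rw [map_add, map_smul, hy, hz]; module
  by_cases h2 : μ = 1
  · subst h2
    refine lieC H h0 (x := x) (y := y) (z := z + p • x)
      (hF.change 1 0 0 0 1 0 p 0 1 (by module) (by module) (by module) (by norm_num)) hy q ?_
    rw [map_add, map_smul, H.self, hz]; module
  · have h3 : μ - 1 ≠ 0 := sub_ne_zero.2 h2
    refine lieB H h0 (x := x) (y := y) (z := z + (p / μ) • x + (q / (μ - 1)) • y)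
      (hF.change 1 0 0 0 1 0 (p / μ) (q / (μ - 1)) 1 (by module) (by module) (by module)
        (by norm_num)) hy μ h1 ?_
    rw [map_add, map_add, map_smul, map_smul, H.self, hy, hz]
    match_scalars <;> field_simp <;> ring

theorem lie (H : PA m b) (h0 : m = 0) : Concl m b := by
  by_cases hE : ∃ (x : P) (μ : ℂ) (v : P), μ ≠ 0 ∧ v ≠ 0 ∧ b x v = μ • v
  · obtain ⟨x, μ, v, hμ, hv, h⟩ := hE
    refine lieEig H h0 (x := μ⁻¹ • x) hv ?_
    rw [map_smul, LinearMap.smul_apply, h, smul_smul, inv_mul_cancel₀ hμ, one_smul]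
  have hno : ∀ (x v : P) (μ : ℂ), v ≠ 0 → b x v = μ • v → μ = 0 := by
    intro x v μ hv h
    by_contra hμ
    exact hE ⟨x, μ, v, hμ, hv, h⟩
  have hnil : ∀ x y, b x (b x (b x y)) = 0 := by
    intro x
    rcases eig_or_nil H.dim (b x) with ⟨μ, v, h⟩ | h
    · exact absurd ⟨x, μ, v, h⟩ hE
    · exact h
  by_cases hb : ∃ x y, b x y ≠ 0
  · obtain ⟨x, y, hw0⟩ := hb
    have main : ∀ x y, b x y ≠ 0 → Fr x y (b x y) ∧ b x (b x y) = 0 := by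
      intro x y hw0
      have hx0 : x ≠ 0 := by rintro rfl; simp at hw0
      have hxy : ∀ a c : ℂ, a • x + c • y = 0 → a = 0 ∧ c = 0 := by
        intro a c h
        have h1 := congrArg (b x) h
        simp only [map_add, map_smul, H.self, smul_zero, zero_add, map_zero] at h1
        have hc : c = 0 := (smul_eq_zero.1 h1).resolve_right hw0
        subst hc
        exact ⟨(smul_eq_zero.1 (by simpa using h : a • x = 0)).resolve_right hx0, rfl⟩
      have hcomb : ∀ a c : ℂ, b x y ≠ a • x + c • y := by
        intro a c h
        have h1 : b x (b x y) = c • b x y := by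
          conv_lhs => rw [h]
          simp [H.self]
        have hc := hno _ _ _ hw0 h1
        have h2 : b y (b x y) = (-a) • b x y := by
          conv_lhs => rw [h]
          rw [map_add, map_smul, map_smul, H.self, H.anti y x]
          module
        have ha := hno _ _ _ hw0 h2
        apply hw0
        rw [h, hc, neg_eq_zero.1 ha]; simp
      have hF : Fr x y (b x y) := by
        intro a d c h
        by_cases hc : c = 0
        · subst hc
          obtain ⟨h1, h2⟩ := hxy a d (by simpa using h)
          exact ⟨h1, h2, rfl⟩
        · exfalso
          apply hcomb (-(a / c)) (-(d / c))
          apply smul_right_injective P hc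
          simp only [smul_add, smul_smul]
          have e1 : c * (-(a / c)) = -a := by field_simp
          have e2 : c * (-(d / c)) = -d := by field_simp
          rw [e1, e2]
          linear_combination (norm := module) h
      refine ⟨hF, ?_⟩
      obtain ⟨α, β, γ, hw⟩ := hF.span H.dim (b x (b x y))
      have h3 := hnil x y
      rw [hw] at h3
      simp only [map_add, map_smul, H.self, hw] at h3
      obtain ⟨j1, j2, j3⟩ := hF (γ * α) (γ * β) (β + γ * γ)
        (by linear_combination (norm := module) h3)
      have hγ : γ = 0 := by
        have : γ ^ 3 = 0 := by linear_combination γ * j3 - j2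
        exact pow_eq_zero_iff (by norm_num) |>.1 this
      have hβ : β = 0 := by simpa [hγ] using j3
      subst hγ hβ
      have h4 : b (b x y) x = (-α) • x := by
        rw [H.anti, hw]; module
      have := hno _ _ _ hx0 h4
      rw [hw, neg_eq_zero.1 this]; simp
    obtain ⟨hF, h1⟩ := main x y hw0
    have hw0' : b y x ≠ 0 := by rw [H.anti]; simpa
    obtain ⟨-, h2⟩ := main y x hw0'
    refine mk2 H h0 hF rfl h1 ?_
    rw [H.anti y x, map_neg, neg_eq_zero] at h2
    exact h2
  · push Not at hb
    have : Nontrivial P := Module.nontrivial_of_finrank_pos (R := ℂ) (by rw [H.dim]; norm_num)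
    obtain ⟨x, hx⟩ := exists_ne (0 : P)
    obtain ⟨y, z, hF⟩ := ext1 H.dim hx
    exact mk1 H h0 hF (hb _ _) (hb _ _) (hb _ _)

theorem PA.b0 (H : PA m b) {x y : P} (h : b x y = 0) : b y x = 0 := by
  rw [H.anti, h, neg_zero]

theorem nilp13 (H : PA m b) {x w z : P} (hF : Fr x w z) (hxx : m x x = w) (hxw : m x w = 0)
    (hxz : m x z = 0) (hww : m w w = 0) (hwz : m w z = 0) (hzz : m z z = 0) : Concl m b := by
  have hbxw : b x w = 0 := by
    apply H.b0
    rw [← hxx, H.leib]; simp [H.self]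
  obtain ⟨α, β, γ, hb⟩ := hF.span H.dim (b x z)
  have hα : α = 0 := by
    have h := H.leib x z x
    rw [hxz, H.self, H.anti z x, hb] at h
    simp only [map_neg, map_add, map_smul, hxx, hxw, hxz, map_zero, LinearMap.zero_apply] at h
    exact (hF 0 α 0 (by linear_combination (norm := module) h)).2.1
  subst hα
  have hbwz : b w z = 0 := by
    rw [← hxx, H.leib, H.comm, hb]
    simp [hxw, hxz]
  by_cases hγ : γ = 0
  · subst hγ
    by_cases hβ : β = 0
    · subst hβ
      exact mk13 H hF hxx hxw hxz hww hwz hzz hbxw (by rw [hb]; module) hbwz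
    · refine mk15 H (e1 := x) (e2 := w) (e3 := β⁻¹ • z)
        (hF.change 1 0 0 0 1 0 0 0 β⁻¹ (by module) (by module) (by module) (by simpa))
        hxx hxw ?_ hww ?_ ?_ hbxw ?_ ?_
      · simp [hxz]
      · simp [hwz]
      · simp [hzz]
      · rw [map_smul, hb]
        match_scalars <;> field_simp <;> ring
      · simp [hbwz]
  · refine mk14 H (e1 := γ⁻¹ • x) (e2 := (γ⁻¹ * γ⁻¹) • w) (e3 := z + (β / γ) • w)
        (hF.change γ⁻¹ 0 0 0 (γ⁻¹ * γ⁻¹) 0 0 (β / γ) 1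
          (by module) (by module) (by module) (by simpa)) ?_ ?_ ?_ ?_ ?_ ?_ ?_ ?_ ?_
    · simp [hxx, smul_smul]
    · simp [hxw]
    · simp [hxz, hxw]
    · simp [hww]
    · simp [hww, hwz]
    · simp [hww, hwz, hzz, H.comm z w]
    · simp [hbxw]
    · simp only [map_smul, map_add, LinearMap.smul_apply, hb, hbxw]
      match_scalars <;> field_simp <;> ring
    · simp [hbwz, H.self]

theorem nilp16 (H : PA m b) (hF : Fr e1 e2 e3) (m11 : m e1 e1 = 0) (m12 : m e1 e2 = e3)
    (m13 : m e1 e3 = 0) (m22 : m e2 e2 = 0) (m23 : m e2 e3 = 0) (m33 : m e3 e3 = 0) :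
    Concl m b := by
  obtain ⟨α, β, γ, hb⟩ := hF.span H.dim (b e1 e2)
  have hβ : β = 0 := by
    have h := H.leib e1 e1 e2
    rw [H.comm (b e1 e2) e1, m11, hb] at h
    simp only [map_add, map_smul, m11, m12, m13, map_zero, LinearMap.zero_apply] at h
    have := (hF 0 0 (β + β) (by linear_combination (norm := module) -h)).2.2
    linear_combination (1/2) * this
  have hα : α = 0 := by
    have h := H.leib e2 e2 e1
    rw [H.comm (b e2 e1) e2, m22, H.anti e2 e1, hb] at h
    simp only [map_neg, map_add, map_smul, m22, m23, H.comm e2 e1, m12, map_zero,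
      LinearMap.zero_apply] at h
    have := (hF 0 0 (α + α) (by linear_combination (norm := module) h)).2.2
    linear_combination (1/2) * this
  subst hα hβ
  have hb' : b e1 e2 = γ • e3 := by rw [hb]; module
  refine mk16 γ H hF m11 m12 m13 m22 m23 m33 hb' (H.b0 ?_) (H.b0 ?_)
  · rw [← m12, H.leib, H.self, H.anti e2 e1, hb']; simp [m13]
  · rw [← m12, H.leib, H.self, hb', H.comm _ e2]; simp [m23]

theorem nilp (H : PA m b) (hm : m ≠ 0) (hn : ∀ x y, m x (m x (m x y)) = 0) : Concl m b := by
  by_cases h3 : ∃ x, m x (m x x) ≠ 0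
  · obtain ⟨x, hx⟩ := h3
    have hF : Fr x (m x x) (m x (m x x)) := by
      intro a c d h
      have h1 := congrArg (m x) h
      simp only [map_add, map_smul, hn, map_zero, smul_zero, add_zero] at h1
      have h2 := congrArg (m x) h1
      simp only [map_add, map_smul, hn, map_zero, smul_zero, add_zero] at h2
      have ha := (smul_eq_zero.1 h2).resolve_right hx
      subst ha
      simp only [zero_smul, zero_add] at h1 h
      have hc := (smul_eq_zero.1 h1).resolve_right hx
      subst hc
      simp only [zero_smul, zero_add] at h
      exact ⟨rfl, rfl, (smul_eq_zero.1 h).resolve_right hx⟩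
    have hb1 : b x (m x x) = 0 := by
      apply H.b0
      rw [H.leib]; simp [H.self]
    have hb2 : b x (m x (m x x)) = 0 := by
      apply H.b0
      rw [H.leib, H.b0 hb1]; simp [H.self]
    refine mk6 H hF rfl rfl (hn _ _) ?_ ?_ ?_ hb1 hb2 ?_
    · rw [H.assoc, hn]
    · rw [H.assoc, hn]
    · rw [H.assoc, H.assoc, hn]
    · rw [H.leib, hb2]; simp
  push Not at h3
  have hsq : ∀ x y, m x (m y y) = 0 := by
    intro x y
    have p1 := h3 (x + y)
    have p2 := h3 (x - y)
    have p3 := h3 x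
    simp only [map_add, map_sub, LinearMap.add_apply, LinearMap.sub_apply] at p1 p2
    have c1 : m y (m x y) = m x (m y y) := by
      rw [H.comm x y, ← H.assoc, H.comm]
    have c2 : m y (m y x) = m x (m y y) := by
      rw [← H.assoc, H.comm]
    rw [c1, c2] at p1 p2
    have : (6 : ℂ) • m x (m y y) = 0 := by
      linear_combination (norm := module) p1 + p2 - (2 : ℂ) • p3
    simpa using this
  have T : ∀ x y z, m x (m y z) = 0 := by
    intro x y z
    have p1 := hsq x (y + z)
    simp only [map_add, LinearMap.add_apply, hsq, H.comm z y] at p1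
    have : (2 : ℂ) • m x (m y z) = 0 := by linear_combination (norm := module) p1
    simpa using this
  have T' : ∀ x y z, m (m x y) z = 0 := by
    intro x y z
    rw [H.assoc, T]
  have hex : ∃ x, m x x ≠ 0 := by
    by_contra hc
    push Not at hc
    apply hm
    refine LinearMap.ext fun x => LinearMap.ext fun y => ?_
    have p1 := hc (x + y)
    simp only [map_add, LinearMap.add_apply, hc, H.comm y x] at p1
    have : (2 : ℂ) • m x y = 0 := by linear_combination (norm := module) p1
    simpa using this
  obtain ⟨x, hx⟩ := hex
  obtain ⟨z0, hF0⟩ := ext2 H.dim (x := x) (y := m x x) (by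
    intro a c h
    have h1 := congrArg (m x) h
    simp only [map_add, map_smul, T, map_zero, smul_zero, add_zero] at h1
    have ha := (smul_eq_zero.1 h1).resolve_right hx
    subst ha
    simp only [zero_smul, zero_add] at h
    exact ⟨rfl, (smul_eq_zero.1 h).resolve_right hx⟩)
  obtain ⟨α, β, γ, hxz0⟩ := hF0.span H.dim (m x z0)
  have hh : γ = 0 ∧ α = 0 := by
    have h1 := T x x z0
    rw [hxz0] at h1
    simp only [map_add, map_smul, T, hxz0] at h1
    obtain ⟨j1, j2, j3⟩ := hF0 (γ * α) (α + γ * β) (γ * γ)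
      (by linear_combination (norm := module) h1)
    have hg := mul_self_eq_zero.1 j3
    exact ⟨hg, by simpa [hg] using j2⟩
  obtain ⟨rfl, rfl⟩ := hh
  obtain ⟨z, hz⟩ : ∃ z, z = z0 - β • x := ⟨_, rfl⟩
  have hF : Fr x (m x x) z :=
    hF0.change 1 0 0 0 1 0 (-β) 0 1 (by module) (by module) (by rw [hz]; module) (by norm_num)
  have hxz : m x z = 0 := by
    rw [hz, map_sub, hxz0, map_smul]; module
  obtain ⟨f, d0, g, hzz0⟩ := hF.span H.dim (m z z)
  have hf : f = 0 := by
    have h1 := T x z z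
    rw [hzz0] at h1
    simp only [map_add, map_smul, T, hxz] at h1
    exact (hF 0 f 0 (by linear_combination (norm := module) h1)).2.1
  subst hf
  have hzz : ∃ d : ℂ, m z z = d • m x x := by
    have h1 := T z z z
    rw [hzz0] at h1
    simp only [map_add, map_smul, T, H.comm z x, hxz, smul_zero, zero_add, add_zero] at h1
    rcases smul_eq_zero.1 h1 with h | h
    · exact ⟨d0, by rw [hzz0, h]; module⟩
    · exact ⟨0, by rw [h]; module⟩
  obtain ⟨d, hzz⟩ := hzz
  by_cases hd : d = 0
  · subst hd
    exact nilp13 H hF rfl (T _ _ _) hxz (T _ _ _) (T' _ _ _) (by rw [hzz]; module)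
  obtain ⟨t, ht⟩ := IsAlgClosed.exists_eq_mul_self (-1 / d)
  have htd : t * t * d = -1 := by rw [← ht]; field_simp
  have ht0 : t ≠ 0 := by rintro rfl; simp at htd
  refine nilp16 H (e1 := x + t • z) (e2 := x - t • z) (e3 := (2 : ℂ) • m x x)
    (hF.change 1 0 t 1 0 (-t) 0 2 0 (by module) (by module) (by module) ?_) ?_ ?_ ?_ ?_ ?_ ?_
  · intro h
    apply ht0
    linear_combination (1/4) * h
  · simp only [map_add, map_smul, LinearMap.add_apply, LinearMap.smul_apply, H.comm z x, hxz, hzz]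
    match_scalars
    linear_combination htd
  · simp only [map_add, map_sub, map_smul, LinearMap.add_apply, LinearMap.smul_apply, H.comm z x,
      hxz, hzz]
    match_scalars
    linear_combination -htd
  · rw [map_smul, T, smul_zero]
  · simp only [map_sub, map_smul, LinearMap.sub_apply, LinearMap.smul_apply, H.comm z x, hxz, hzz]
    match_scalars
    linear_combination htd
  · rw [map_smul, T, smul_zero]
  · rw [map_smul, T, smul_zero]

theorem central (H : PA m b) {e : P} (he : m e e = e) (y : P) : b e y = 0 := by
  have h := H.leib e e y
  rw [he, H.comm (b e y) e] at h
  have h1 := congrArg (m e) h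
  rw [map_add, ← H.assoc, he] at h1
  have h2 : m e (b e y) = 0 := by linear_combination (norm := module) -h1
  rw [h, h2, add_zero]

/-- Halves of an involution are idempotents. -/
theorem halves (H : PA m b) {e y : P} (he : m e e = e) (hey : m e y = y) {D t : ℂ}
    (hyy : m y y = D • e) (ht : t * t * D = 1) :
    m ((1/2 : ℂ) • e + (t/2) • y) ((1/2 : ℂ) • e + (t/2) • y) = (1/2 : ℂ) • e + (t/2) • y ∧
    m ((1/2 : ℂ) • e - (t/2) • y) ((1/2 : ℂ) • e - (t/2) • y) = (1/2 : ℂ) • e - (t/2) • y ∧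
    m ((1/2 : ℂ) • e + (t/2) • y) ((1/2 : ℂ) • e - (t/2) • y) = 0 := by
  simp only [map_add, map_sub, map_smul, LinearMap.add_apply, LinearMap.sub_apply,
    LinearMap.smul_apply, H.comm y e, hey, he, hyy]
  refine ⟨?_, ?_, ?_⟩
  · match_scalars
    · linear_combination (1/4) * ht
    · ring
  · match_scalars
    · linear_combination (1/4) * ht
    · ring
  · match_scalars
    · linear_combination -(1/4) * ht
    · ring

theorem two_a (H : PA m b) {e f z : P} (hF : Fr e f z) (he : m e e = e) (hf : m f f = f)
    (hef : m e f = 0) (hez : m e z = z) (hfz : m f z = 0) : Concl m b := by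
  obtain ⟨p, q, s, hzz⟩ := hF.span H.dim (m z z)
  have hq : q = 0 := by
    have h : m f (m z z) = 0 := by rw [← H.assoc, hfz]; simp
    rw [hzz] at h
    simp only [map_add, map_smul, H.comm f e, hef, hf, hfz] at h
    exact (hF 0 q 0 (by linear_combination (norm := module) h)).2.1
  subst hq
  obtain ⟨y, hy⟩ : ∃ y, y = z - (s / 2) • e := ⟨_, rfl⟩
  have hF' : Fr e f y :=
    hF.change 1 0 0 0 1 0 (-(s/2)) 0 1 (by module) (by module) (by rw [hy]; module) (by norm_num)
  have hey : m e y = y := by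
    rw [hy, map_sub, map_smul, hez, he]
  have hfy : m f y = 0 := by
    rw [hy, map_sub, map_smul, hfz, H.comm f e, hef]; simp
  have hyy : m y y = (p + s * s / 4) • e := by
    rw [hy]
    simp only [map_sub, map_smul, LinearMap.sub_apply, LinearMap.smul_apply, H.comm z e, hez, he,
      hzz]
    module
  generalize p + s * s / 4 = D at hyy
  by_cases hD : D = 0
  · subst hD
    exact mk8 H (e1 := f) (e2 := e) (e3 := y)
      (hF'.change 0 1 0 1 0 0 0 0 1 (by module) (by module) (by module) (by norm_num))
      hf (by rw [H.comm, hef]) hfy he hey (by rw [hyy]; module)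
      (central H hf _) (central H hf _) (central H he _)
  obtain ⟨t, ht⟩ := IsAlgClosed.exists_eq_mul_self (1 / D)
  have htd : t * t * D = 1 := by rw [← ht]; field_simp
  have ht0 : t ≠ 0 := by rintro rfl; simp at htd
  obtain ⟨i1, i2, i3⟩ := halves H he hey hyy htd
  refine mk7 H (e1 := (1/2 : ℂ) • e + (t/2) • y) (e2 := (1/2 : ℂ) • e - (t/2) • y) (e3 := f)
    (hF'.change (1/2) 0 (t/2) (1/2) 0 (-(t/2)) 0 1 0 (by module) (by module) (by module) ?_)
    i1 i3 ?_ i2 ?_ hf (central H i1 _) (central H i1 _) (central H i2 _)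
  · intro h
    apply ht0
    linear_combination 2 * h
  · rw [H.comm]
    simp [hfy, H.comm f e, hef]
  · rw [H.comm]
    simp [hfy, H.comm f e, hef]

theorem two_b (H : PA m b) {e f z : P} (hF : Fr e f z) (he : m e e = e) (hf : m f f = f)
    (hef : m e f = 0) (hez : m e z = 0) (hfz : m f z = 0) : Concl m b := by
  obtain ⟨p, q, s, hzz⟩ := hF.span H.dim (m z z)
  have hp : p = 0 := by
    have h : m e (m z z) = 0 := by rw [← H.assoc, hez]; simp
    rw [hzz] at h
    simp only [map_add, map_smul, hef, he, hez] at h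
    exact (hF p 0 0 (by linear_combination (norm := module) h)).1
  have hq : q = 0 := by
    have h : m f (m z z) = 0 := by rw [← H.assoc, hfz]; simp
    rw [hzz] at h
    simp only [map_add, map_smul, H.comm f e, hef, hf, hfz] at h
    exact (hF 0 q 0 (by linear_combination (norm := module) h)).2.1
  subst hp hq
  by_cases hs : s = 0
  · subst hs
    exact mk10 H hF he hef hez hf hfz (by rw [hzz]; module)
      (central H he _) (central H he _) (central H hf _)
  · refine mk7 H (e1 := e) (e2 := f) (e3 := s⁻¹ • z)
      (hF.change 1 0 0 0 1 0 0 0 s⁻¹ (by module) (by module) (by module) (by simpa))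
      he hef ?_ hf ?_ ?_ (central H he _) (central H he _) (central H hf _)
    · simp [hez]
    · simp [hfz]
    · simp only [map_smul, LinearMap.smul_apply, hzz]
      match_scalars <;> field_simp <;> ring

theorem two (H : PA m b) {e f : P} (he : m e e = e) (hf : m f f = f)
    (hef : m e f = 0) (he0 : e ≠ 0) (hf0 : f ≠ 0) : Concl m b := by
  obtain ⟨z, hF⟩ := ext2 H.dim (x := e) (y := f) (by
    intro a c h
    have h1 := congrArg (m e) h
    simp only [map_add, map_smul, he, hef, map_zero, smul_zero, add_zero] at h1
    have ha := (smul_eq_zero.1 h1).resolve_right he0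
    subst ha
    simp only [zero_smul, zero_add] at h
    exact ⟨rfl, (smul_eq_zero.1 h).resolve_right hf0⟩)
  have hfe : m f e = 0 := by rw [H.comm, hef]
  have k1 : m e (m e z) = m e z := by rw [← H.assoc, he]
  have k2 : m f (m f z) = m f z := by rw [← H.assoc, hf]
  have k3 : m e (m f z) = 0 := by rw [← H.assoc, hef]; simp
  have k4 : m f (m e z) = 0 := by rw [← H.assoc, hfe]; simp
  obtain ⟨p1, q1, s1, h1⟩ := hF.span H.dim (m e z)
  obtain ⟨p2, q2, s2, h2⟩ := hF.span H.dim (m f z)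
  by_cases hs1 : s1 = 0
  · by_cases hs2 : s2 = 0
    · subst hs1 hs2
      refine two_b H (e := e) (f := f) (z := z - m e z - m f z)
        (hF.change 1 0 0 0 1 0 (-p1 - p2) (-q1 - q2) 1 (by module) (by module)
          (by rw [h1, h2]; module) (by norm_num)) he hf hef ?_ ?_
      · rw [map_sub, map_sub, k1, k3]; simp
      · rw [map_sub, map_sub, k2, k4]; simp
    · exact two_a H (e := f) (f := e) (z := m f z)
        (hF.change 0 1 0 1 0 0 p2 q2 s2 (by module) (by module) h2 (by simpa)) hf he hfe k2 k3
  · exact two_a H (e := e) (f := f) (z := m e z)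
        (hF.change 1 0 0 0 1 0 p1 q1 s1 (by module) (by module) h1 (by simpa)) he hf hef k1 k4

theorem nonab (H : PA m b) {e y z : P} (hF : Fr e y z) {β γ : ℂ} (h : b y z = β • y + γ • z)
    (hne : ¬ (β = 0 ∧ γ = 0)) : ∃ p q r s : ℂ, Fr e (p • y + q • z) (r • y + s • z) ∧
      b (p • y + q • z) (r • y + s • z) = p • y + q • z := by
  by_cases hβ : β = 0
  · have hγ : γ ≠ 0 := fun hγ => hne ⟨hβ, hγ⟩
    subst hβ
    refine ⟨0, 1, -γ⁻¹, 0, hF.change 1 0 0 0 0 1 0 (-γ⁻¹) 0 (by module) (by module) (by module)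
      (by simpa), ?_⟩
    simp only [map_add, map_smul, LinearMap.add_apply, LinearMap.smul_apply, H.self, H.anti z y, h]
    match_scalars <;> field_simp <;> ring
  · refine ⟨β, γ, 0, β⁻¹, hF.change 1 0 0 0 β γ 0 0 β⁻¹ (by module) (by module) (by module)
      (by simp [hβ]), ?_⟩
    simp only [map_add, map_smul, LinearMap.add_apply, LinearMap.smul_apply, H.self, H.anti z y, h]
    match_scalars <;> field_simp <;> ring

theorem caseA (H : PA m b) {e : P} (he : m e e = e) (he0 : e ≠ 0)
    (hno : ∀ e f, m e e = e → m f f = f → m e f = 0 → e ≠ 0 → f ≠ 0 → False)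
    (hA : ∀ y, ∃ c : ℂ, m e y = c • e) : Concl m b := by
  have hnil : ∀ u, m e u = 0 → ∀ v, m u (m u (m u v)) = 0 := by
    intro u hu
    rcases idem_or_nil H u with ⟨w, hw, hw0⟩ | h
    · exact (hno e _ he hw (by rw [← H.assoc, hu]; simp) he0 hw0).elim
    · exact h
  by_cases hsq : ∃ u, m e u = 0 ∧ m u u ≠ 0
  · obtain ⟨u, hu, huu⟩ := hsq
    have n := hnil u hu
    have euu : m e (m u u) = 0 := by rw [← H.assoc, hu]; simp
    have euuu : m e (m u (m u u)) = 0 := by rw [← H.assoc, hu]; simp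
    have hF : Fr e u (m u u) := by
      intro a c d h
      have h1 := congrArg (m e) h
      simp only [map_add, map_smul, he, hu, euu, map_zero, smul_zero, add_zero] at h1
      have ha := (smul_eq_zero.1 h1).resolve_right he0
      subst ha
      simp only [zero_smul, zero_add] at h
      have h2 := congrArg (m u) h
      simp only [map_add, map_smul, map_zero] at h2
      have h3 := congrArg (m u) h2
      simp only [map_add, map_smul, map_zero, n, smul_zero, add_zero] at h3
      have hc : c = 0 := by
        rcases smul_eq_zero.1 h3 with hc | hc
        · exact hc
        · rw [hc, smul_zero, add_zero] at h2
          exact (smul_eq_zero.1 h2).resolve_right huu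
      subst hc
      simp only [zero_smul, zero_add] at h
      exact ⟨rfl, rfl, (smul_eq_zero.1 h).resolve_right huu⟩
    have huuu : m u (m u u) = 0 := by
      obtain ⟨α, β, γ, h⟩ := hF.span H.dim (m u (m u u))
      have hα : α = 0 := by
        rw [h] at euuu
        simp only [map_add, map_smul, he, hu, euu] at euuu
        exact (hF α 0 0 (by linear_combination (norm := module) euuu)).1
      subst hα
      by_contra hne
      have h1 := congrArg (m u) h
      simp only [map_add, map_smul, n, zero_smul, zero_add] at h1
      have h2 := congrArg (m u) h1
      simp only [map_add, map_smul, n, map_zero, smul_zero, add_zero] at h2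
      have hβ := (smul_eq_zero.1 h2.symm).resolve_right hne
      subst hβ
      simp only [zero_smul, zero_add] at h1
      have hγ := (smul_eq_zero.1 h1.symm).resolve_right hne
      subst hγ
      apply hne
      rw [h]; module
    refine mk12 H hF he hu euu rfl huuu ?_ (central H he _) (central H he _) (H.b0 ?_)
    · rw [H.assoc, huuu, map_zero]
    · rw [H.leib, H.self]; simp
  · push Not at hsq
    obtain ⟨y0, z0, hF0⟩ := ext1 H.dim he0
    obtain ⟨c1, h1⟩ := hA y0
    obtain ⟨c2, h2⟩ := hA z0
    obtain ⟨y, hy⟩ : ∃ y, y = y0 - c1 • e := ⟨_, rfl⟩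
    obtain ⟨z, hz⟩ : ∃ z, z = z0 - c2 • e := ⟨_, rfl⟩
    have hF : Fr e y z := hF0.change 1 0 0 (-c1) 1 0 (-c2) 0 1 (by module) (by rw [hy]; module)
      (by rw [hz]; module) (by norm_num)
    have hey : m e y = 0 := by rw [hy, map_sub, map_smul, h1, he, sub_self]
    have hez : m e z = 0 := by rw [hz, map_sub, map_smul, h2, he, sub_self]
    have hyy := hsq y hey
    have hzz := hsq z hez
    have hyz : m y z = 0 := by
      have h := hsq (y + z) (by rw [map_add, hey, hez, add_zero])
      simp only [map_add, LinearMap.add_apply, hyy, hzz, H.comm z y] at h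
      have : (2 : ℂ) • m y z = 0 := by linear_combination (norm := module) h
      simpa using this
    obtain ⟨α, β, γ, hb⟩ := hF.span H.dim (b y z)
    have hα : α = 0 := by
      have h := H.leib e y z
      rw [hey, central H he, hb] at h
      simp only [map_add, map_smul, he, hey, hez, map_zero, LinearMap.zero_apply] at h
      exact (hF α 0 0 (by linear_combination (norm := module) -h)).1
    subst hα
    have hb' : b y z = β • y + γ • z := by rw [hb]; module
    by_cases hne : β = 0 ∧ γ = 0
    · obtain ⟨rfl, rfl⟩ := hne
      exact mk19 H hF he hey hez hyy hyz hzz (central H he _) (central H he _)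
        (by rw [hb']; module)
    · obtain ⟨p, q, r, s, hF', hbb⟩ := nonab H hF hb' hne
      refine mk20 H hF' he ?_ ?_ ?_ ?_ ?_ (central H he _) (central H he _) hbb
      all_goals simp [hey, hez, hyy, hyz, hzz, H.comm z y]

theorem caseB1 (H : PA m b) {e y z : P} (he : m e e = e) (he0 : e ≠ 0)
    (hno : ∀ e f, m e e = e → m f f = f → m e f = 0 → e ≠ 0 → f ≠ 0 → False)
    (hF : Fr e y z) (hey : m e y = y) (hez : m e z = 0) : Concl m b := by
  have hyz : m y z = 0 := by
    rw [← hey, H.comm e y, H.assoc, hez, map_zero]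
  have hz0 : z ≠ 0 := by
    rintro rfl
    exact one_ne_zero (hF 0 0 1 (by simp)).2.2
  have hzz : m z z = 0 := by
    obtain ⟨p, q, s, hzz⟩ := hF.span H.dim (m z z)
    have h : m e (m z z) = 0 := by rw [← H.assoc, hez]; simp
    rw [hzz] at h
    simp only [map_add, map_smul, he, hey, hez] at h
    obtain ⟨hp, hq, -⟩ := hF p q 0 (by linear_combination (norm := module) h)
    subst hp hq
    by_cases hs : s = 0
    · rw [hzz, hs]; module
    · refine (hno e (s⁻¹ • z) he ?_ (by simp [hez]) he0 (by simp [hs, hz0])).elim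
      simp only [map_smul, LinearMap.smul_apply, hzz]
      match_scalars <;> field_simp <;> ring
  obtain ⟨p, q, s, hyy⟩ := hF.span H.dim (m y y)
  have hs : s = 0 := by
    have h : m e (m y y) = m y y := by rw [← H.assoc, hey]
    rw [hyy] at h
    simp only [map_add, map_smul, he, hey, hez] at h
    exact (hF 0 0 s (by linear_combination (norm := module) -h)).2.2
  subst hs
  obtain ⟨u, hu⟩ : ∃ u, u = y - (q / 2) • e := ⟨_, rfl⟩
  have hF' : Fr e u z :=
    hF.change 1 0 0 (-(q/2)) 1 0 0 0 1 (by module) (by rw [hu]; module) (by module) (by norm_num)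
  have heu : m e u = u := by
    rw [hu, map_sub, map_smul, hey, he]
  have huz : m u z = 0 := by
    rw [hu, map_sub, map_smul]; simp [hyz, hez]
  have huu : m u u = (p + q * q / 4) • e := by
    rw [hu]
    simp only [map_sub, map_smul, LinearMap.sub_apply, LinearMap.smul_apply, H.comm y e, hey, he,
      hyy]
    module
  generalize p + q * q / 4 = D at huu
  by_cases hD : D = 0
  · subst hD
    refine mk11 H hF' he heu hez (by rw [huu]; module) huz hzz (central H he _) (central H he _) ?_
    have h1 := H.leib e z u
    rw [hez, central H he, H.anti z u] at h1
    have h2 := H.leib e u z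
    rw [heu, central H he] at h2
    simp only [map_neg, map_zero, LinearMap.zero_apply, zero_add] at h1 h2
    rw [h2, ← neg_eq_zero, ← h1]
  obtain ⟨t, ht⟩ := IsAlgClosed.exists_eq_mul_self (1 / D)
  have htd : t * t * D = 1 := by rw [← ht]; field_simp
  obtain ⟨i1, i2, i3⟩ := halves H he heu huu htd
  refine (hno _ _ i1 i2 i3 ?_ ?_).elim
  · intro h
    have := (hF' (1/2) (t/2) 0 (by linear_combination (norm := module) h)).1
    norm_num at this
  · intro h
    have := (hF' (1/2) (-(t/2)) 0 (by linear_combination (norm := module) h)).1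
    norm_num at this

theorem caseB2 (H : PA m b) {e : P} (he0 : e ≠ 0)
    (hno : ∀ e f, m e e = e → m f f = f → m e f = 0 → e ≠ 0 → f ≠ 0 → False)
    (hu : ∀ x, m e x = x) : Concl m b := by
  have he := hu e
  have hu' : ∀ x, m x e = x := fun x => by rw [H.comm, hu]
  have : FiniteDimensional ℂ P := FiniteDimensional.of_finrank_pos (by rw [H.dim]; norm_num)
  have : Nontrivial P := ⟨e, 0, he0⟩
  have hnil : ∀ y, ∃ c : ℂ, ∀ v, m (y - c • e) (m (y - c • e) (m (y - c • e) v)) = 0 := by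
    intro y
    obtain ⟨c, hc⟩ := Module.End.exists_eigenvalue (m y)
    obtain ⟨v, hv⟩ := hc.exists_hasEigenvector
    have hv0 := hv.2
    have hyv : m y v = c • v := hv.apply_eq_smul
    refine ⟨c, ?_⟩
    have huv : m (y - c • e) v = 0 := by
      simp [hyv, hu]
    generalize y - c • e = u at huv
    rcases idem_or_nil H u with ⟨w, hw, hw0⟩ | h
    · exfalso
      refine hno (m u w) (e - m u w) hw ?_ ?_ hw0 ?_
      · simp only [map_sub, LinearMap.sub_apply, hu, hu', hw]; module
      · rw [map_sub, hu', hw, sub_self]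
      · intro h
        have h1 : m (m u w) v = 0 := by
          rw [H.comm u w, H.assoc, huv, map_zero]
        rw [← sub_eq_zero.1 h, hu] at h1
        exact hv0 h1
    · exact h
  by_cases hsq : ∃ u, (∀ v, m u (m u (m u v)) = 0) ∧ m u u ≠ 0
  · obtain ⟨u, n, huu⟩ := hsq
    have huuu : m u (m u u) = 0 := by
      have := n e
      rwa [hu'] at this
    have hF : Fr e u (m u u) := by
      intro a c d h
      have h1 := congrArg (m u) h
      simp only [map_add, map_smul, hu', huuu, map_zero, smul_zero, add_zero] at h1
      have h2 := congrArg (m u) h1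
      simp only [map_add, map_smul, hu', huuu, map_zero, smul_zero, add_zero] at h2
      have ha := (smul_eq_zero.1 h2).resolve_right huu
      subst ha
      simp only [zero_smul, zero_add] at h h1
      have hc := (smul_eq_zero.1 h1).resolve_right huu
      subst hc
      simp only [zero_smul, zero_add] at h
      exact ⟨rfl, rfl, (smul_eq_zero.1 h).resolve_right huu⟩
    refine mk9 H hF he (hu _) (hu _) rfl huuu ?_ (central H he _) (central H he _) (H.b0 ?_)
    · rw [H.assoc, huuu, map_zero]
    · rw [H.leib, H.self]; simp
  push Not at hsq
  obtain ⟨y0, z0, hF0⟩ := ext1 H.dim he0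
  obtain ⟨c1, h1⟩ := hnil y0
  obtain ⟨c2, h2⟩ := hnil z0
  obtain ⟨y, hy⟩ : ∃ y, y = y0 - c1 • e := ⟨_, rfl⟩
  obtain ⟨z, hz⟩ : ∃ z, z = z0 - c2 • e := ⟨_, rfl⟩
  rw [← hy] at h1
  rw [← hz] at h2
  have hF : Fr e y z := hF0.change 1 0 0 (-c1) 1 0 (-c2) 0 1 (by module) (by rw [hy]; module)
    (by rw [hz]; module) (by norm_num)
  have hyy := hsq y h1
  have hzz := hsq z h2
  have hyz : m y z = 0 := by
    obtain ⟨c, h3⟩ := hnil (y + z)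
    have h := hsq _ h3
    simp only [map_add, map_sub, map_smul, LinearMap.add_apply, LinearMap.sub_apply,
      LinearMap.smul_apply, hu, hu', hyy, hzz, H.comm z y] at h
    have hy1 : m y (m y z) = 0 := by rw [← H.assoc, hyy]; simp
    have hz1 : m z (m y z) = 0 := by rw [H.comm y z, ← H.assoc, hzz]; simp
    have hg := congrArg (m y) h
    simp only [map_add, map_sub, map_smul, hu', hyy, hy1, map_zero] at hg
    have hg' : (2 * c) • m y z = (c * c) • y := by
      linear_combination (norm := module) -hg
    have hgg := congrArg (m z) hg'
    simp only [map_smul, hz1, H.comm z y, smul_zero] at hgg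
    rcases smul_eq_zero.1 hgg.symm with hc | hc
    · have hc0 := mul_self_eq_zero.1 hc
      subst hc0
      have : (2 : ℂ) • m y z = 0 := by linear_combination (norm := module) h
      simpa using this
    · exact hc
  obtain ⟨α, β, γ, hb⟩ := hF.span H.dim (b y z)
  have hα : α = 0 := by
    have h := H.leib y y z
    rw [hyy, H.comm (b y z) y, hb] at h
    simp only [map_add, map_smul, hu', hyy, hyz, map_zero, LinearMap.zero_apply] at h
    have := (hF 0 (α + α) 0 (by linear_combination (norm := module) -h)).2.1
    linear_combination (1/2) * this
  subst hα
  have hb' : b y z = β • y + γ • z := by rw [hb]; module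
  by_cases hne : β = 0 ∧ γ = 0
  · obtain ⟨rfl, rfl⟩ := hne
    exact mk17 H hF he (hu _) (hu _) hyy hyz hzz (central H he _) (central H he _)
      (by rw [hb']; module)
  · obtain ⟨p, q, r, s, hF', hbb⟩ := nonab H hF hb' hne
    refine mk18 H hF' he (hu _) (hu _) ?_ ?_ ?_ (central H he _) (central H he _) hbb
    all_goals simp [hyy, hyz, hzz, H.comm z y]

theorem idemCase (H : PA m b) {e : P} (he : m e e = e) (he0 : e ≠ 0) : Concl m b := by
  by_cases hno : ∀ e f, m e e = e → m f f = f → m e f = 0 → e ≠ 0 → f ≠ 0 → False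
  · by_cases hA : ∀ y, ∃ c : ℂ, m e y = c • e
    · exact caseA H he he0 hno hA
    push Not at hA
    obtain ⟨y, hy⟩ := hA
    have hey : m e (m e y) = m e y := by rw [← H.assoc, he]
    by_cases hz : ∃ z, z ≠ 0 ∧ m e z = 0
    · obtain ⟨z, hz0, hez⟩ := hz
      refine caseB1 H he he0 hno (y := m e y) (z := z) ?_ hey hez
      intro a c d h
      have h1 := congrArg (m e) h
      simp only [map_add, map_smul, he, hey, hez, map_zero, smul_zero, add_zero] at h1
      have hc : c = 0 := by
        by_contra hc
        apply hy (-(a / c))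
        apply smul_right_injective P hc
        simp only [smul_smul]
        have e1 : c * (-(a / c)) = -a := by field_simp
        rw [e1]
        linear_combination (norm := module) h1
      subst hc
      have ha : a = 0 := by
        simp only [zero_smul, add_zero] at h1
        exact (smul_eq_zero.1 h1).resolve_right he0
      subst ha
      simp only [zero_smul, zero_add] at h
      exact ⟨rfl, rfl, (smul_eq_zero.1 h).resolve_right hz0⟩
    · push Not at hz
      refine caseB2 H he0 hno fun x => ?_
      by_contra hne
      refine hz (x - m e x) (fun h => hne (sub_eq_zero.1 h).symm) ?_
      rw [map_sub, ← H.assoc, he, sub_self]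
  · push Not at hno
    obtain ⟨e', f', h1, h2, h3, h4, h5⟩ := hno
    exact two H h1 h2 h3 h4 h5.1

theorem mainC (H : PA m b) : Concl m b := by
  by_cases h0 : m = 0
  · exact lie H h0
  by_cases hi : ∃ e, m e e = e ∧ e ≠ 0
  · obtain ⟨e, he, he0⟩ := hi
    exact idemCase H he he0
  · refine nilp H h0 fun x => ?_
    rcases idem_or_nil H x with ⟨w, hw, hw0⟩ | h
    · exact (hi ⟨_, hw, hw0⟩).elim
    · exact h

end Helpers

/-- The algebraic classification of the 3-dimensional complex Poisson algebras. -/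
theorem stmt1 (P : Type*) [AddCommGroup P] [Module ℂ P]
    (hdim : Module.finrank ℂ P = 3)
    (m b : P →ₗ[ℂ] P →ₗ[ℂ] P)
    (hcomm : ∀ x y, m x y = m y x)
    (hassoc : ∀ x y z, m (m x y) z = m x (m y z))
    (hanti : ∀ x y, b x y = - b y x)
    (hjac : ∀ x y z, b (b x y) z + b (b y z) x + b (b z x) y = 0)
    (hleib : ∀ x y z, b (m x y) z = m (b x z) y + m x (b y z)) :
    IsoP P m b 0 0 ∨                                     -- P₃,₁
    IsoP P m b 0 (sb cb2) ∨                              -- P₃,₂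
    IsoP P m b 0 (sb cb3) ∨                              -- P₃,₃
    (∃ α : ℂ, IsoP P m b 0 (sb (cb4 α))) ∨               -- P₃,₄^α
    IsoP P m b 0 (sb cb5) ∨                              -- P₃,₅
    IsoP P m b (sb cm6) 0 ∨                              -- P₃,₆
    IsoP P m b (sb cm7) 0 ∨                              -- P₃,₇
    IsoP P m b (sb cm8) 0 ∨                              -- P₃,₈
    IsoP P m b (sb cm9) 0 ∨                              -- P₃,₉
    IsoP P m b (sb cm10) 0 ∨                             -- P₃,₁₀
    IsoP P m b (sb cm11) 0 ∨                             -- P₃,₁₁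
    IsoP P m b (sb cm12) 0 ∨                             -- P₃,₁₂
    IsoP P m b (sb cm13) 0 ∨                             -- P₃,₁₃
    IsoP P m b (sb cm13) (sb cb14) ∨                     -- P₃,₁₄
    IsoP P m b (sb cm13) (sb cb15) ∨                     -- P₃,₁₅
    (∃ α : ℂ, IsoP P m b (sb cm16) (sb (cb16 α))) ∨      -- P₃,₁₆^α
    IsoP P m b (sb cm17) 0 ∨                             -- P₃,₁₇
    IsoP P m b (sb cm17) (sb cb18) ∨                     -- P₃,₁₈
    IsoP P m b (sb cm19) 0 ∨                             -- P₃,₁₉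
    IsoP P m b (sb cm19) (sb cb18) := by                 -- P₃,₂₀
  exact mainC ⟨hdim, hcomm, hassoc, hanti, hjac, hleib⟩
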